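/- Let L be a bounded chain (a bounded linearly ordered lattice). A lattice polynomial function f : L^n → L is self-commuting if and only if f is a weighted disjunction or f has chain form. -/

import Mathlib

/-! For a lattice polynomial `f` and a threshold `t`, the truth value of `t ≤ f x` depends only on
the set of coordinates `i` with `t ≤ x i`. A level of `f` is disjunctive if `t ≤ f x` says that some
coordinate in a fixed set `T` is at least `t`, and conjunctive if it says that all of them are.
Universal quantifiers commute with each other, and so do existential ones, so a function all of
whose levels are of these two kinds is self-commuting.

Conversely, write `1_S` for the indicator vector of `S`. Let `S` be minimal with `t ≤ f 1_S` and
have at least two elements, one of them `i₀`, and let `t ≤ f 1_R`. Self-commutation applied to the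
matrix with row `i₀` equal to `1_R`, the other rows in `S` equal to `1_S`, and all other rows zero
shows `S ⊆ R`. Hence every level of a self-commuting polynomial is disjunctive or conjunctive. The
supports of conjunctive levels increase with the threshold, and those with at least two elements
form the chain in the normal form. -/

/-- `f` commutes with `g`. -/
def Commutes {A : Type*} {n m : ℕ} (f : (Fin n → A) → A) (g : (Fin m → A) → A) : Prop :=
  ∀ M : Fin n → Fin m → A,
    f (fun i => g (fun j => M i j)) = g (fun j => f (fun i => M i j))

/-- `f` is self-commuting. -/
def SelfCommuting {A : Type*} {n : ℕ} (f : (Fin n → A) → A) : Prop :=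
  Commutes f f

/-- Lattice polynomial functions: the smallest class of functions `L^n → L`
containing the projections and the constant functions and closed under
pointwise joins and meets. -/
inductive IsLatticePolynomial {L : Type*} [Lattice L] {n : ℕ} : ((Fin n → L) → L) → Prop
  | proj (i : Fin n) : IsLatticePolynomial (fun x => x i)
  | const (c : L) : IsLatticePolynomial (fun _ => c)
  | sup {f g : (Fin n → L) → L} : IsLatticePolynomial f → IsLatticePolynomial g →
      IsLatticePolynomial (fun x => f x ⊔ g x)
  | inf {f g : (Fin n → L) → L} : IsLatticePolynomial f → IsLatticePolynomial g →
      IsLatticePolynomial (fun x => f x ⊓ g x)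

/-- `f` is a weighted disjunction:
`f(x) = a_∅ ∨ ⋁_{i ∈ [n]} (a_i ∧ x_i)` for some coefficients. -/
def IsWeightedDisjunction {L : Type*} [Lattice L] {n : ℕ} (f : (Fin n → L) → L) : Prop :=
  ∃ (a₀ : L) (a : Fin n → L),
    ∀ x : Fin n → L,
      f x = Finset.univ.fold (fun u v : L => u ⊔ v) a₀ (fun i => a i ⊓ x i)

/-- `f` has chain form:
`f(x) = a_∅ ∨ ⋁_{i ∈ [n]} (a_i ∧ x_i) ∨ ⋁_{1 ≤ ℓ ≤ r} (a_{S_ℓ} ∧ ⋀_{i ∈ S_ℓ} x_i)`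
for a chain of subsets `S_1 ⊆ ⋯ ⊆ S_r ⊆ [n]` with `r ≥ 1` and `|S_1| ≥ 2`,
where the coefficients satisfy `a_I ≤ a_J` whenever `I ⊆ J` among the indexed
sets, and for every `i ∉ S_1` there is `j ∈ S_1` with `a_i ≤ a_j`. -/
def HasChainForm {L : Type*} [Lattice L] {n : ℕ} (f : (Fin n → L) → L) : Prop :=
  ∃ (r : ℕ) (hr : 0 < r) (S : Fin r → Finset (Fin n)) (a₀ : L) (a : Fin n → L)
    (b : Fin r → L) (hne : ∀ ℓ : Fin r, (S ℓ).Nonempty),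
    (∀ ℓ m : Fin r, ℓ ≤ m → S ℓ ⊆ S m) ∧
    2 ≤ (S ⟨0, hr⟩).card ∧
    (∀ i, a₀ ≤ a i) ∧
    (∀ ℓ, a₀ ≤ b ℓ) ∧
    (∀ i ℓ, i ∈ S ℓ → a i ≤ b ℓ) ∧
    (∀ ℓ m, S ℓ ⊆ S m → b ℓ ≤ b m) ∧
    (∀ i, i ∉ S ⟨0, hr⟩ → ∃ j ∈ S ⟨0, hr⟩, a i ≤ a j) ∧
    ∀ x : Fin n → L,
      f x = Finset.univ.fold (fun u v : L => u ⊔ v)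
        (Finset.univ.fold (fun u v : L => u ⊔ v) a₀ (fun i => a i ⊓ x i))
        (fun ℓ : Fin r => b ℓ ⊓ (S ℓ).inf' (hne ℓ) (fun i => x i))

theorem le_fold_sup {ι L : Type*} [LinearOrder L] (s : Finset ι) (b t : L) (g : ι → L) :
    t ≤ s.fold (fun u v : L => u ⊔ v) b g ↔ t ≤ b ∨ ∃ i ∈ s, t ≤ g i :=
  Finset.le_fold_max t

section Levels

variable {ι L : Type*}

/-- The level of `f` at `t` is disjunctive with support `T`: the inequality `t ≤ f x` means that
`t ≤ x i` for some `i ∈ T`. -/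
def IsDisjunctiveLevel [Preorder L] (f : (ι → L) → L) (t : L) (T : Finset ι) : Prop :=
  ∀ x, t ≤ f x ↔ ∃ i ∈ T, t ≤ x i

/-- The level of `f` at `t` is conjunctive with support `T`: the inequality `t ≤ f x` means that
`t ≤ x i` for all `i ∈ T`. -/
def IsConjunctiveLevel [Preorder L] (f : (ι → L) → L) (t : L) (T : Finset ι) : Prop :=
  ∀ x, t ≤ f x ↔ ∀ i ∈ T, t ≤ x i

/-- Every level of `f` is disjunctive or conjunctive. This is the property through which
self-commutation and the normal forms are compared. -/
def HasPureLevels [Preorder L] (f : (ι → L) → L) : Prop :=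
  ∀ t, ∃ T, IsDisjunctiveLevel f t T ∨ IsConjunctiveLevel f t T

theorem HasPureLevels.selfCommuting [PartialOrder L] {n : ℕ} {f : (Fin n → L) → L}
    (hf : HasPureLevels f) : SelfCommuting f := by
  intro M
  refine eq_of_forall_le_iff fun t => ?_
  obtain ⟨T, hT | hT⟩ := hf t
  · simp only [hT _]
    exact ⟨fun ⟨i, hi, j, hj, h⟩ => ⟨j, hj, i, hi, h⟩, fun ⟨j, hj, i, hi, h⟩ => ⟨i, hi, j, hj, h⟩⟩
  · simp only [hT _]
    exact ⟨fun h j hj i hi => h i hi j hj, fun h i hi j hj => h j hj i hi⟩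

variable [LinearOrder L] {n : ℕ} {f : (Fin n → L) → L}

theorem IsWeightedDisjunction.hasPureLevels (hf : IsWeightedDisjunction f) : HasPureLevels f := by
  obtain ⟨a₀, a, hf⟩ := hf
  intro t
  by_cases h₀ : t ≤ a₀
  · exact ⟨∅, .inr fun x => by simp [hf, le_fold_sup, h₀]⟩
  · exact ⟨Finset.univ.filter fun i => t ≤ a i, .inl fun x => by simp [hf, le_fold_sup, h₀]⟩

theorem HasChainForm.hasPureLevels (hf : HasChainForm f) : HasPureLevels f := by
  obtain ⟨r, hr, S, a₀, a, b, hne, hS, -, -, -, -, -, hdom, hf⟩ := hf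
  have le_f_iff (t : L) (x : Fin n → L) : t ≤ f x ↔
      (t ≤ a₀ ∨ ∃ i, t ≤ a i ∧ t ≤ x i) ∨ ∃ l, t ≤ b l ∧ ∀ i ∈ S l, t ≤ x i := by
    simp [hf, le_fold_sup]
  intro t
  by_cases h₀ : t ≤ a₀
  · exact ⟨∅, .inr fun x => by simp [le_f_iff, h₀]⟩
  by_cases ha : ∃ i, t ≤ a i
  · obtain ⟨j, hjS, hj⟩ : ∃ j ∈ S ⟨0, hr⟩, t ≤ a j := by
      obtain ⟨i, hi⟩ := ha
      by_cases hiS : i ∈ S ⟨0, hr⟩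
      · exact ⟨i, hiS, hi⟩
      · obtain ⟨j, hjS, hij⟩ := hdom i hiS
        exact ⟨j, hjS, hi.trans hij⟩
    -- Every `S l` contains `j`, so the terms of the chain are absorbed by `a j ⊓ x j`.
    have absorb (x : Fin n → L) (l : Fin r) (hx : ∀ i ∈ S l, t ≤ x i) : t ≤ x j :=
      hx j (hS ⟨0, hr⟩ l (Nat.zero_le _) hjS)
    refine ⟨Finset.univ.filter fun i => t ≤ a i, .inl fun x => ?_⟩
    simp only [le_f_iff, h₀, false_or, Finset.mem_filter, Finset.mem_univ, true_and]
    exact or_iff_left_of_imp fun ⟨l, _, hx⟩ => ⟨j, hj, absorb x l hx⟩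
  rw [not_exists] at ha
  by_cases hb : ∃ l, t ≤ b l
  · obtain ⟨l, hl⟩ := hb
    obtain ⟨m, -, hm⟩ := exists_minimal_le_of_wellFoundedLT (fun l => t ≤ b l) l hl
    have m_le (k : Fin r) (hk : t ≤ b k) : m ≤ k := (le_total m k).elim id (hm.le_of_le hk)
    refine ⟨S m, .inr fun x => ?_⟩
    simp only [le_f_iff, h₀, ha, false_and, exists_false, false_or]
    exact ⟨fun ⟨k, hk, hx⟩ i hi => hx i (hS m k (m_le k hk) hi), fun hx => ⟨m, hm.prop, hx⟩⟩
  · rw [not_exists] at hb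
    exact ⟨∅, .inl fun x => by simp [le_f_iff, h₀, ha, hb]⟩

end Levels

section Coefficients

variable {ι L : Type*} [DecidableEq ι] {f : (ι → L) → L} {t : L} {S T : Finset ι}

/-- The value of `f` at the indicator vector of `S`. For a lattice polynomial `f` it is the
coefficient of `⋀_{i ∈ S} x_i` in the largest disjunctive normal form of `f`. -/
def dnfCoeff [LE L] [BoundedOrder L] (f : (ι → L) → L) (S : Finset ι) : L :=
  f (S.piecewise ⊤ ⊥)

theorem dnfCoeff_mono [Preorder L] [BoundedOrder L] (hf : Monotone f) : Monotone (dnfCoeff f) := by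
  intro S T hST
  refine hf fun i => ?_
  by_cases hi : i ∈ S
  · simp [hi, hST hi]
  · simp [hi]

variable [PartialOrder L] [BoundedOrder L]

theorem IsDisjunctiveLevel.le_dnfCoeff_iff (h : IsDisjunctiveLevel f t T) (ht : ⊥ < t) :
    t ≤ dnfCoeff f S ↔ ∃ i ∈ T, i ∈ S := by
  simp [dnfCoeff, h _, Finset.piecewise, apply_ite (t ≤ ·), ht.ne']

theorem IsConjunctiveLevel.le_dnfCoeff_iff (h : IsConjunctiveLevel f t T) (ht : ⊥ < t) :
    t ≤ dnfCoeff f S ↔ T ⊆ S := by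
  simp [dnfCoeff, h _, Finset.piecewise, apply_ite (t ≤ ·), ht.ne', Finset.subset_iff]

end Coefficients

namespace IsLatticePolynomial

variable {L : Type*} {n : ℕ} {f : (Fin n → L) → L}

protected theorem monotone [Lattice L] (hf : IsLatticePolynomial f) : Monotone f := by
  induction hf with
  | proj i => exact fun _ _ h => h i
  | const c => exact monotone_const
  | sup _ _ ihf ihg => exact ihf.sup ihg
  | inf _ _ ihf ihg => exact ihf.inf ihg

variable [LinearOrder L] [BoundedOrder L] {t : L} {x : Fin n → L}

theorem le_apply_iff_le_dnfCoeff (hf : IsLatticePolynomial f) :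
    t ≤ f x ↔ t ≤ dnfCoeff f {i | t ≤ x i} := by
  unfold dnfCoeff
  induction hf with
  | proj i =>
    by_cases h : t ≤ x i
    · simp [h]
    · simp [h, (bot_le.trans_lt (not_le.mp h)).ne']
  | const c => rfl
  | sup _ _ ihf ihg => simp only [le_sup_iff, ihf, ihg]
  | inf _ _ ihf ihg => simp only [le_inf_iff, ihf, ihg]

theorem le_apply_of_le_dnfCoeff (hf : IsLatticePolynomial f) {S : Finset (Fin n)}
    (hS : t ≤ dnfCoeff f S) (hx : ∀ i ∈ S, t ≤ x i) : t ≤ f x :=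
  hf.le_apply_iff_le_dnfCoeff.mpr <|
    hS.trans (dnfCoeff_mono hf.monotone fun i hi => by simpa using hx i hi)

theorem exists_minimal_of_le_apply (hf : IsLatticePolynomial f) (h : t ≤ f x) :
    ∃ S, Minimal (fun S => t ≤ dnfCoeff f S) S ∧ ∀ i ∈ S, t ≤ x i := by
  obtain ⟨S, hSx, hS⟩ := exists_minimal_le_of_wellFoundedLT (fun S => t ≤ dnfCoeff f S) _
    (hf.le_apply_iff_le_dnfCoeff.mp h)
  exact ⟨S, hS, fun i hi => by simpa using hSx hi⟩

theorem le_dnfCoeff_comm (hf : IsLatticePolynomial f) (hc : SelfCommuting f)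
    (B : Fin n → Finset (Fin n)) :
    t ≤ dnfCoeff f {i | t ≤ dnfCoeff f (B i)} ↔
      t ≤ dnfCoeff f {j | t ≤ dnfCoeff f {i | j ∈ B i}} := by
  have row_col : f (fun i => dnfCoeff f (B i)) = f (fun j => dnfCoeff f {i | j ∈ B i}) := by
    refine (hc fun i => (B i).piecewise ⊤ ⊥).trans (congrArg f (funext fun j => ?_))
    exact congrArg f (funext fun i => by simp [Finset.piecewise])
  rw [← hf.le_apply_iff_le_dnfCoeff, ← hf.le_apply_iff_le_dnfCoeff, row_col]

theorem subset_of_minimal_of_nontrivial (hf : IsLatticePolynomial f) (hc : SelfCommuting f)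
    {S R : Finset (Fin n)} (hS : Minimal (fun S => t ≤ dnfCoeff f S) S) (hS₂ : S.Nontrivial)
    (hR : t ≤ dnfCoeff f R) : S ⊆ R := by
  obtain ⟨i₀, hi₀, i₁, hi₁, hne⟩ := hS₂
  let B : Fin n → Finset (Fin n) := fun i => if i = i₀ then R else if i ∈ S then S else ∅
  have rows : S ⊆ ({i | t ≤ dnfCoeff f (B i)} : Finset (Fin n)) := by
    intro i hi
    by_cases h : i = i₀
    · simpa [B, h] using hR
    · simpa [B, h, hi] using hS.prop
  have cols : ({j | t ≤ dnfCoeff f {i | j ∈ B i}} : Finset (Fin n)) ⊆ S ∩ R := by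
    intro j hj
    have col_subset : ({i | j ∈ B i} : Finset (Fin n)) ⊆ S := by
      intro i hi
      by_contra hiS
      have : i ≠ i₀ := fun h => hiS (h ▸ hi₀)
      simp [B, hiS, this] at hi
    have subset_col := hS.le_of_le (by simpa using hj) col_subset
    have hjR : j ∈ R := by simpa [B] using subset_col hi₀
    have hjS : j ∈ S := by simpa [B, hne.symm, Finset.mem_coe.mp hi₁] using subset_col hi₁
    exact Finset.mem_inter.mpr ⟨hjS, hjR⟩
  have le_cols := (hf.le_dnfCoeff_comm hc B).mp <|
    hS.prop.trans (dnfCoeff_mono hf.monotone rows)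
  have subset_cols := hS.le_of_le le_cols (cols.trans Finset.inter_subset_left)
  exact subset_cols.trans (cols.trans Finset.inter_subset_right)

theorem hasPureLevels (hf : IsLatticePolynomial f) (hc : SelfCommuting f) : HasPureLevels f := by
  intro t
  by_cases h : ∃ S, Minimal (fun S => t ≤ dnfCoeff f S) S ∧ ∀ i, S ≠ {i}
  · obtain ⟨S, hS, hS₁⟩ := h
    have subset_of_le {R : Finset (Fin n)} (hR : t ≤ dnfCoeff f R) : S ⊆ R := by
      obtain rfl | hne := S.eq_empty_or_nonempty
      · exact R.empty_subset
      · have hS₂ := hne.exists_eq_singleton_or_nontrivial.resolve_left fun ⟨i, hi⟩ => hS₁ i hi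
        exact hf.subset_of_minimal_of_nontrivial hc hS hS₂ hR
    refine ⟨S, .inr fun x => ⟨fun hx i hi => ?_, hf.le_apply_of_le_dnfCoeff hS.prop⟩⟩
    simpa using subset_of_le (hf.le_apply_iff_le_dnfCoeff.mp hx) hi
  · push Not at h
    refine ⟨Finset.univ.filter fun i => t ≤ dnfCoeff f {i}, .inl fun x => ⟨fun hx => ?_, ?_⟩⟩
    · obtain ⟨S, hS, hSx⟩ := hf.exists_minimal_of_le_apply hx
      obtain ⟨i, rfl⟩ := h S hS
      exact ⟨i, by simpa using hS.prop, hSx i (Finset.mem_singleton_self i)⟩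
    · rintro ⟨i, hi, hx⟩
      exact hf.le_apply_of_le_dnfCoeff (S := {i}) (by simpa using hi) (by simpa using hx)

end IsLatticePolynomial

section ConjunctiveSupports

variable {ι L : Type*}

/-- The supports with at least two elements of the conjunctive levels of `f`; they are the sets
`S_ℓ` of its chain form. The level at `⊥` is excluded because it holds trivially, so that every set
is a support of it. -/
def conjunctiveSupports [Preorder L] [OrderBot L] (f : (ι → L) → L) : Set (Finset ι) :=
  {S | S.Nontrivial ∧ ∃ t, ⊥ < t ∧ IsConjunctiveLevel f t S}

variable [LinearOrder L] [BoundedOrder L] {f : (ι → L) → L}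

theorem isChain_conjunctiveSupports : IsChain (· ≤ ·) (conjunctiveSupports f) := by
  classical
  rintro S ⟨-, s, hs, hS⟩ T ⟨-, t, ht, hT⟩ -
  have hsS : s ≤ dnfCoeff f S := (hS.le_dnfCoeff_iff hs).mpr subset_rfl
  have htT : t ≤ dnfCoeff f T := (hT.le_dnfCoeff_iff ht).mpr subset_rfl
  obtain h | h := le_total s t
  · exact .inl ((hS.le_dnfCoeff_iff hs).mp (h.trans htT))
  · exact .inr ((hT.le_dnfCoeff_iff ht).mp (h.trans hsS))

theorem exists_mem_dnfCoeff_singleton_le [DecidableEq ι] (hp : HasPureLevels f) {S : Finset ι}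
    (hS : S ∈ conjunctiveSupports f) (i : ι) : ∃ j ∈ S, dnfCoeff f {i} ≤ dnfCoeff f {j} := by
  obtain ⟨hS₂, s, hs, hsS⟩ := hS
  obtain ⟨k, hk⟩ := hS₂.nonempty
  obtain hi | hi := eq_bot_or_bot_lt (dnfCoeff f {i})
  · exact ⟨k, hk, hi ▸ bot_le⟩
  have hiS : dnfCoeff f {i} ≤ dnfCoeff f S := by
    have hi_lt : dnfCoeff f {i} < s := not_le.mp fun h =>
      hS₂.not_subset_singleton ((hsS.le_dnfCoeff_iff hs).mp h)
    exact hi_lt.le.trans ((hsS.le_dnfCoeff_iff hs).mpr subset_rfl)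
  obtain ⟨T, hT | hT⟩ := hp (dnfCoeff f {i})
  · obtain ⟨j, hjT, hjS⟩ := (hT.le_dnfCoeff_iff hi).mp hiS
    exact ⟨j, hjS, (hT.le_dnfCoeff_iff hi).mpr ⟨j, hjT, Finset.mem_singleton_self j⟩⟩
  · have hTS : T ⊆ S := (hT.le_dnfCoeff_iff hi).mp hiS
    obtain rfl | rfl := Finset.subset_singleton_iff.mp ((hT.le_dnfCoeff_iff hi).mp le_rfl)
    · exact ⟨k, hk, (hT.le_dnfCoeff_iff hi).mpr (Finset.empty_subset _)⟩
    · exact ⟨i, Finset.singleton_subset_iff.mp hTS, le_rfl⟩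

end ConjunctiveSupports

theorem exists_strictMono_fin_range_eq_of_isChain {α : Type*} [PartialOrder α] {s : Set α}
    (hs : IsChain (· ≤ ·) s) (hfin : s.Finite) :
    ∃ e : Fin s.ncard → α, StrictMono e ∧ Set.range e = s := by
  classical
  have := hfin.fintype
  let : LinearOrder s :=
    { (inferInstance : PartialOrder s) with
      le_total := fun a b => hs.total a.2 b.2
      toDecidableLE := Classical.decRel _ }
  let e : Fin s.ncard ≃o s := monoEquivOfFin s (by rw [← Nat.card_eq_fintype_card]; rfl)
  refine ⟨fun k => e k, fun _ _ h => e.strictMono h, ?_⟩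
  rw [Set.range_comp' Subtype.val, e.surjective.range_eq, Set.image_univ, Subtype.range_coe]

namespace HasPureLevels

variable {L : Type*} [LinearOrder L] [BoundedOrder L] {n : ℕ} {f : (Fin n → L) → L}

theorem le_apply_iff (hp : HasPureLevels f) (hf : IsLatticePolynomial f) {t : L}
    {x : Fin n → L} :
    t ≤ f x ↔ (t ≤ dnfCoeff f ∅ ∨ ∃ i, t ≤ dnfCoeff f {i} ∧ t ≤ x i) ∨
      ∃ S ∈ conjunctiveSupports f, t ≤ dnfCoeff f S ∧ ∀ i ∈ S, t ≤ x i := by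
  constructor
  · intro hx
    obtain rfl | ht := eq_bot_or_bot_lt t
    · exact .inl (.inl bot_le)
    obtain ⟨T, hT | hT⟩ := hp t
    · obtain ⟨i, hi, hix⟩ := (hT x).mp hx
      exact .inl (.inr ⟨i, (hT.le_dnfCoeff_iff ht).mpr ⟨i, hi, Finset.mem_singleton_self i⟩, hix⟩)
    have hTx := (hT x).mp hx
    have htT : t ≤ dnfCoeff f T := (hT.le_dnfCoeff_iff ht).mpr subset_rfl
    obtain rfl | hne := T.eq_empty_or_nonempty
    · exact .inl (.inl htT)
    obtain ⟨i, rfl⟩ | hT₂ := hne.exists_eq_singleton_or_nontrivial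
    · exact .inl (.inr ⟨i, htT, hTx i (Finset.mem_singleton_self i)⟩)
    · exact .inr ⟨T, ⟨hT₂, t, ht, hT⟩, htT, hTx⟩
  · rintro ((h | ⟨i, h, hx⟩) | ⟨S, -, h, hx⟩)
    · exact hf.le_apply_of_le_dnfCoeff h (by simp)
    · exact hf.le_apply_of_le_dnfCoeff h (by simpa using hx)
    · exact hf.le_apply_of_le_dnfCoeff h hx

theorem isWeightedDisjunction (hp : HasPureLevels f) (hf : IsLatticePolynomial f)
    (hS : conjunctiveSupports f = ∅) : IsWeightedDisjunction f := by
  refine ⟨dnfCoeff f ∅, fun i => dnfCoeff f {i}, fun x => eq_of_forall_le_iff fun t => ?_⟩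
  simp [hp.le_apply_iff hf, le_fold_sup, hS]

theorem hasChainForm (hp : HasPureLevels f) (hf : IsLatticePolynomial f)
    (hS : (conjunctiveSupports f).Nonempty) : HasChainForm f := by
  have hfin : (conjunctiveSupports f).Finite := Set.toFinite _
  obtain ⟨S, hSmono, hSrange⟩ :=
    exists_strictMono_fin_range_eq_of_isChain isChain_conjunctiveSupports hfin
  have hSiff (T) : T ∈ conjunctiveSupports f ↔ ∃ l, S l = T := (Set.ext_iff.mp hSrange T).symm
  have hSmem (l) : S l ∈ conjunctiveSupports f := (hSiff _).mpr ⟨l, rfl⟩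
  have hSnontrivial (l) : (S l).Nontrivial := (hSmem l).1
  have hA : Monotone (dnfCoeff f) := dnfCoeff_mono hf.monotone
  refine ⟨_, (Set.ncard_pos hfin).mpr hS, S, dnfCoeff f ∅, fun i => dnfCoeff f {i},
    fun l => dnfCoeff f (S l), fun l => (hSnontrivial l).nonempty, fun l m h => hSmono.monotone h,
    Finset.one_lt_card_iff_nontrivial.mpr (hSnontrivial _), fun i => hA (Finset.empty_subset _),
    fun l => hA (Finset.empty_subset _), fun i l h => hA (Finset.singleton_subset_iff.mpr h),
    fun l m h => hA h, fun i _ => exists_mem_dnfCoeff_singleton_le hp (hSmem _) i,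
    fun x => eq_of_forall_le_iff fun t => ?_⟩
  simp [hp.le_apply_iff hf, le_fold_sup, hSiff]

end HasPureLevels

/-- Main theorem: over a bounded chain, a lattice polynomial function is
self-commuting if and only if it is a weighted disjunction or has chain form. -/
theorem selfCommuting_iff_weightedDisjunction_or_chainForm
    {L : Type*} [LinearOrder L] [BoundedOrder L] {n : ℕ}
    (f : (Fin n → L) → L) (hf : IsLatticePolynomial f) :
    SelfCommuting f ↔ IsWeightedDisjunction f ∨ HasChainForm f := by
  constructor
  · intro hc
    have hp : HasPureLevels f := hf.hasPureLevels hc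
    obtain hS | hS := (conjunctiveSupports f).eq_empty_or_nonempty
    · exact .inl (hp.isWeightedDisjunction hf hS)
    · exact .inr (hp.hasChainForm hf hS)
  · rintro (hw | hc)
    · exact hw.hasPureLevels.selfCommuting
    · exact hc.hasPureLevels.selfCommuting
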